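/- Suppose W: ℝ^{2×2} → [0,∞) is continuous and |√W − √(W₀)| ≤ σ√(W₀) holds pointwise for some σ ∈ (0,1/2). Let W̃(M) := W(0,m₂). Then d_{W̃}(A,B) ≤ (1+σ)·d_{W̃₀}(A,B) = (1+σ)·d_{W₀}(A,B) ≤ ((1+σ)/(1−σ))·d_W(A,B), and since σ < 1/2 one has (1+σ)/(1−σ) < 3, hence d_{W̃}(A,B) < 3 d_W(A,B). -/

import Mathlib

/-!
Each inequality between geodesic distances is obtained by comparing lengths curve by curve
(`dW_le_mul`). The perturbation bound gives `(1 - σ)√W₀ ≤ √W ≤ (1 + σ)√W₀`, and this yields the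
first and third claims. For the equality `d_{W̃₀} = d_{W₀}`: `W̃₀ ≤ W₀` gives one inequality, and
the projection `(m₁, m₂) ↦ (0, m₂)` of a curve is again a curve between the same wells, whose
`W₀`-length is at most the `W̃₀`-length of the original one, since the projection is linear and
norm-decreasing.

The final strict inequality needs `d_W(A, B) > 0`, which follows from `d_{W₀}(A, B) > 0`
(`dW_W0_pos`). With `q(M) = ⟨a, m₂⟩` and `c = |a|²`, Cauchy–Schwarz gives
`||q(M)| - c| ≤ |a| √W₀(M)`, while `|q(φ')| ≤ |a| |φ'|`. Hence by the chain rule the integral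
`∫_{-c}^{c} ||t| - c| dt > 0` is a lower bound for `|a|² ∫ √W₀(φ) |φ'|` along every curve joining
`A` to `-A`.
-/

noncomputable section

open MeasureTheory Set Filter

/-- The plane `ℝ²` with the Euclidean norm. -/
abbrev V2 : Type := EuclideanSpace ℝ (Fin 2)

/-- The space of `2 × 2` real matrices with the Frobenius (Euclidean) norm;
an element `M` has entries `M (i, j)` and columns `m_j = (M (·, j))`. -/
abbrev M2 : Type := EuclideanSpace ℝ (Fin 2 × Fin 2)

/-- The point `(s, t) ∈ ℝ²`. -/
def pt (s t : ℝ) : V2 := (WithLp.equiv 2 (Fin 2 → ℝ)).symm ![s, t]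

/-- The `j`-th column of a matrix. -/
def col (M : M2) (j : Fin 2) : V2 :=
  (WithLp.equiv 2 (Fin 2 → ℝ)).symm (fun i => M (i, j))

/-- The matrix with columns `v, w`. -/
def mkM (v w : V2) : M2 :=
  (WithLp.equiv 2 (Fin 2 × Fin 2 → ℝ)).symm (fun p => if p.2 = 1 then w p.1 else v p.1)

/-- The well `A = a ⊗ e₂ = (0, a)`. -/
def wellA (a : V2) : M2 := mkM 0 a

/-- The reference quadratic double-well potential
`W₀(M) = |m₁|² + min{|m₂ - a|², |m₂ + a|²}`. -/
def W0 (a : V2) (M : M2) : ℝ :=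
  ‖col M 0‖ ^ 2 + min (‖col M 1 - a‖ ^ 2) (‖col M 1 + a‖ ^ 2)

/-- The gradient `∇u(x)` of `u : ℝ² → ℝ²`, as a `2 × 2` matrix. -/
def grad (u : V2 → V2) (x : V2) : M2 :=
  (WithLp.equiv 2 (Fin 2 × Fin 2 → ℝ)).symm
    (fun p => fderiv ℝ u x (EuclideanSpace.single p.2 (1:ℝ)) p.1)

/-- The squared Frobenius norm `|∇²u(x)|²` of the second gradient of `u`. -/
def hess2 (u : V2 → V2) (x : V2) : ℝ :=
  ∑ i : Fin 2, ∑ j : Fin 2, ∑ k : Fin 2,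
    (fderiv ℝ (fun y => fderiv ℝ u y (EuclideanSpace.single k (1:ℝ)) i) x
      (EuclideanSpace.single j (1:ℝ))) ^ 2

/-- The singularly perturbed elastic energy `E_ε(u, Ω)`. -/
def En (W : M2 → ℝ) (ε : ℝ) (u : V2 → V2) (Ω : Set V2) : ℝ :=
  ∫ x in Ω, (ε⁻¹ * W (grad u x) + ε * hess2 u x)

/-- A model for membership in `H²(Ω; ℝ²)`: twice continuously differentiable together
with the relevant integrability properties on `Ω`. -/
def MemH2 (u : V2 → V2) (Ω : Set V2) : Prop :=
  ContDiff ℝ 2 u ∧ IntegrableOn (fun x => ‖u x‖) Ω ∧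
    IntegrableOn (fun x => ‖grad u x‖ ^ 2) Ω ∧ IntegrableOn (hess2 u) Ω

/-- The cylinder `ω_h = ω × (-h, h) ⊆ ℝ²`. -/
def cyl (ω : Set ℝ) (h : ℝ) : Set V2 := {x | x 0 ∈ ω ∧ x 1 ∈ Ioo (-h) h}

/-- The limiting deformation `u₀(x) = Ax` for `x₂ > 0`, `Bx` for `x₂ ≤ 0`. -/
def u0 (a : V2) (x : V2) : V2 := if 0 < x 1 then (x 1) • a else (-(x 1)) • a

/-- An admissible sequence for the optimal profile energy on `ω_h`. -/
def AdmSeq (W : M2 → ℝ) (a : V2) (h : ℝ) (ω : Set ℝ)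
    (u : ℕ → V2 → V2) (ε : ℕ → ℝ) : Prop :=
  (∀ n, 0 < ε n ∧ ε n < 1) ∧ Tendsto ε atTop (nhds 0) ∧
  (∀ n, MemH2 (u n) (cyl ω h)) ∧
  Tendsto (fun n => ∫ x in cyl ω h, ‖u n x - u0 a x‖) atTop (nhds 0)

/-- The optimal profile constant `K*` (computed over the cylinder `(-1/2,1/2) × (-h,h)`). -/
def Kstar (W : M2 → ℝ) (a : V2) (h : ℝ) : ℝ :=
  sInf {r | ∃ u ε, AdmSeq W a h (Ioo (-(1:ℝ)/2) (1/2)) u ε ∧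
    r = liminf (fun n => En W (ε n) (u n) (cyl (Ioo (-(1:ℝ)/2) (1/2)) h)) atTop}

/-- An optimal profile sequence with respect to `ω` (at height `h`): an admissible
sequence attaining `lim_n E_{ε_n}(u_n, ω_h) = H¹(ω)·K*`. -/
def IsOptProfile (W : M2 → ℝ) (a : V2) (h : ℝ) (ω : Set ℝ)
    (u : ℕ → V2 → V2) (ε : ℕ → ℝ) : Prop :=
  AdmSeq W a h ω u ε ∧
  Tendsto (fun n => En W (ε n) (u n) (cyl ω h)) atTop
    (nhds ((volume ω).toReal * Kstar W a h))

/-- The unit cube `Q = (-1/2, 1/2)²`. -/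
def Qset : Set V2 := cyl (Ioo (-(1:ℝ)/2) (1/2)) (1/2)

/-- The cell formula `K*_per` over gradients that are 1-periodic in `x₁` and agree
with `∇u₀` near the horizontal boundary of the unit cube `Q`. -/
def KstarPer (W : M2 → ℝ) (a : V2) : ℝ :=
  sInf {r | ∃ (L : ℝ) (u : V2 → V2), 0 < L ∧ MemH2 u Qset ∧
    (∀ x : V2, grad u (x + pt 1 0) = grad u x) ∧
    (∀ x ∈ Qset, 1/4 < |x 1| →
      grad u x = (if 0 < x 1 then wellA a else -(wellA a))) ∧
    r = ∫ x in Qset, (L * W (grad u x) + L⁻¹ * hess2 u x)}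

/-- A model of `W^{1,1}([-1,1]; ℝ^{2×2})` curves: `φ'` is a derivative of `φ` on `[-1,1]`
with integrable norm. -/
def IsCurve (φ φ' : ℝ → M2) : Prop :=
  (∀ s ∈ Icc (-1:ℝ) 1, HasDerivWithinAt φ (φ' s) (Icc (-1:ℝ) 1) s) ∧
  IntegrableOn (fun s => ‖φ' s‖) (Icc (-1:ℝ) 1)

/-- The length `L_W(φ) = 2∫ √(W(φ))|φ'| ds` of a curve on `[-1,1]`. -/
def LW (W : M2 → ℝ) (φ φ' : ℝ → M2) : ℝ :=
  2 * ∫ s in Icc (-1:ℝ) 1, Real.sqrt (W (φ s)) * ‖φ' s‖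

/-- The geodesic distance `d_W(M,N)` between two matrices. -/
def dW (W : M2 → ℝ) (M N : M2) : ℝ :=
  sInf {r | ∃ φ φ', IsCurve φ φ' ∧ φ (-1) = M ∧ φ 1 = N ∧ r = LW W φ φ'}

/-- `L` is a Lipschitz constant for `d_W` on `B_R(0) × B_R(0)`. -/
def IsLipOn (W : M2 → ℝ) (L R : ℝ) : Prop :=
  ∀ M₁ M₂ N₁ N₂ : M2, ‖M₁‖ < R → ‖M₂‖ < R → ‖N₁‖ < R → ‖N₂‖ < R →
    |dW W M₁ N₁ - dW W M₂ N₂| ≤ L * (‖M₁ - M₂‖ + ‖N₁ - N₂‖)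

/-- The one-dimensional transition energy `I_ε(φ)` of a curve on `ℝ`. -/
def Icurve (W : M2 → ℝ) (ε : ℝ) (φ φ' : ℝ → M2) : ℝ :=
  ∫ s : ℝ, (ε⁻¹ * W (φ s) + ε * ‖φ' s‖ ^ 2)

/-- The phase separating point of a curve on `[-1,1]` running from `M` to `N`:
`s_φ^α = (sup φ⁻¹(B_α(M)) + inf φ⁻¹(B_α(N)))/2`. -/
def sSep (φ : ℝ → M2) (M N : M2) (α : ℝ) : ℝ :=
  (sSup {s | s ∈ Icc (-1:ℝ) 1 ∧ ‖φ s - M‖ < α} +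
    sInf {s | s ∈ Icc (-1:ℝ) 1 ∧ ‖φ s - N‖ < α}) / 2

/-- The phase separating point of a curve on `ℝ` running from `M` (at `-∞`) to `N`
(at `+∞`): `(sup φ⁻¹(B_α(M)) + inf φ⁻¹(B_α(N)))/2`. -/
def sSepLine (φ : ℝ → M2) (M N : M2) (α : ℝ) : ℝ :=
  (sSup {s | ‖φ s - M‖ < α} + sInf {s | ‖φ s - N‖ < α}) / 2

/-- The projection of a matrix onto its second column: `(m₁, m₂) ↦ (0, m₂)`. -/
def proj2 (M : M2) : M2 :=
  (WithLp.equiv 2 (Fin 2 × Fin 2 → ℝ)).symm (fun p => if p.2 = 1 then M p else 0)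

/-! ### Columns, projection and the reference potential -/

lemma col_apply (M : M2) (i j : Fin 2) : col M j i = M (i, j) := rfl

lemma proj2_apply (M : M2) (p : Fin 2 × Fin 2) : proj2 M p = if p.2 = 1 then M p else 0 := rfl

lemma mkM_apply (v w : V2) (p : Fin 2 × Fin 2) :
    mkM v w p = if p.2 = 1 then w p.1 else v p.1 := rfl

/-- The column map `M ↦ m_j` as a continuous linear map. -/
def colL (j : Fin 2) : M2 →L[ℝ] V2 :=
  LinearMap.toContinuousLinearMap
    { toFun := fun M => col M j
      map_add' := fun M N => by ext i; simp [col_apply]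
      map_smul' := fun c M => by ext i; simp [col_apply] }

lemma colL_apply (j : Fin 2) (M : M2) : colL j M = col M j := rfl

/-- The projection `(m₁, m₂) ↦ (0, m₂)` as a continuous linear map. -/
def projL : M2 →L[ℝ] M2 :=
  LinearMap.toContinuousLinearMap
    { toFun := fun M => proj2 M
      map_add' := fun M N => by
        ext p
        simp only [proj2_apply, PiLp.add_apply]
        split_ifs <;> simp
      map_smul' := fun c M => by
        ext p
        simp only [proj2_apply, PiLp.smul_apply, RingHom.id_apply]
        split_ifs <;> simp }

lemma projL_apply (M : M2) : projL M = proj2 M := rfl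

lemma continuous_col (j : Fin 2) : Continuous fun M : M2 => col M j := (colL j).continuous

lemma continuous_proj2 : Continuous proj2 := projL.continuous

lemma norm_proj2_le (M : M2) : ‖proj2 M‖ ≤ ‖M‖ := by
  rw [EuclideanSpace.norm_eq, EuclideanSpace.norm_eq]
  refine Real.sqrt_le_sqrt (Finset.sum_le_sum fun p _ => ?_)
  rw [proj2_apply]
  split_ifs
  · exact le_rfl
  · simpa using sq_nonneg (M p)

lemma norm_col_le (M : M2) (j : Fin 2) : ‖col M j‖ ≤ ‖M‖ := by
  rw [EuclideanSpace.norm_eq, EuclideanSpace.norm_eq]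
  refine Real.sqrt_le_sqrt ?_
  rw [Fintype.sum_prod_type]
  refine Finset.sum_le_sum fun i _ => ?_
  exact Finset.single_le_sum (f := fun k => ‖M (i, k)‖ ^ 2) (fun k _ => by positivity)
    (Finset.mem_univ j)

lemma proj2_wellA (a : V2) : proj2 (wellA a) = wellA a := by
  ext p
  simp only [proj2_apply, wellA, mkM_apply]
  split_ifs <;> simp

lemma proj2_neg_wellA (a : V2) : proj2 (-(wellA a)) = -(wellA a) := by
  rw [← projL_apply, map_neg, projL_apply, proj2_wellA]

lemma col_proj2_zero (M : M2) : col (proj2 M) 0 = 0 := by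
  ext i
  simp [col_apply, proj2_apply]

lemma col_proj2_one (M : M2) : col (proj2 M) 1 = col M 1 := by
  ext i
  simp [col_apply, proj2_apply]

lemma col_wellA_one (a : V2) : col (wellA a) 1 = a := by
  ext i
  simp [col_apply, wellA, mkM_apply]

lemma continuous_W0 (a : V2) : Continuous (W0 a) := by
  have h0 := continuous_col 0
  have h1 := continuous_col 1
  unfold W0
  fun_prop

lemma W0_proj2_le (a : V2) (M : M2) : W0 a (proj2 M) ≤ W0 a M := by
  unfold W0
  rw [col_proj2_zero, col_proj2_one]
  have : 0 ≤ ‖col M 0‖ ^ 2 := by positivity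
  simp only [norm_zero]
  linarith

/-- `||⟨a, m₂⟩| - |a|²| ≤ |a| √W₀(M)`: Cauchy–Schwarz for `m₂ ∓ a`. -/
lemma abs_sub_le_sqrt_W0 (a : V2) (M : M2) :
    |(|inner ℝ a (col M 1)| - ‖a‖ ^ 2)| ≤ ‖a‖ * Real.sqrt (W0 a M) := by
  set m := col M 1 with hm
  have hmin : min ‖m - a‖ ‖m + a‖ ≤ Real.sqrt (W0 a M) := by
    refine Real.le_sqrt_of_sq_le ?_
    have h0 : 0 ≤ ‖col M 0‖ ^ 2 := by positivity
    have : (min ‖m - a‖ ‖m + a‖) ^ 2 ≤ min (‖m - a‖ ^ 2) (‖m + a‖ ^ 2) := by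
      refine le_min ?_ ?_
      · exact pow_le_pow_left₀ (by positivity) (min_le_left _ _) 2
      · exact pow_le_pow_left₀ (by positivity) (min_le_right _ _) 2
    unfold W0
    linarith
  refine le_trans ?_ (mul_le_mul_of_nonneg_left hmin (norm_nonneg a))
  rw [mul_min_of_nonneg _ _ (norm_nonneg a)]
  refine le_min ?_ ?_
  · have h := abs_real_inner_le_norm a (m - a)
    rw [inner_sub_right, real_inner_self_eq_norm_sq] at h
    refine le_trans ?_ h
    have := abs_abs_sub_abs_le_abs_sub (inner ℝ a m) (‖a‖ ^ 2)
    rwa [abs_of_nonneg (sq_nonneg ‖a‖)] at this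
  · have h := abs_real_inner_le_norm a (m + a)
    rw [inner_add_right, real_inner_self_eq_norm_sq] at h
    refine le_trans ?_ h
    have := abs_abs_sub_abs_le_abs_sub (inner ℝ a m) (-‖a‖ ^ 2)
    rwa [abs_neg, abs_of_nonneg (sq_nonneg ‖a‖), sub_neg_eq_add] at this

/-! ### Curves and lengths -/

lemma IsCurve.continuousOn {φ φ' : ℝ → M2} (h : IsCurve φ φ') :
    ContinuousOn φ (Icc (-1 : ℝ) 1) := fun s hs => (h.1 s hs).continuousWithinAt

/-- Measurability of `φ'` is automatic: inside the interval it coincides with `deriv φ`. -/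
lemma IsCurve.aestronglyMeasurable {φ φ' : ℝ → M2} (h : IsCurve φ φ') :
    AEStronglyMeasurable φ' (volume.restrict (Icc (-1 : ℝ) 1)) := by
  rw [← restrict_Ioo_eq_restrict_Icc]
  refine (stronglyMeasurable_deriv φ).aestronglyMeasurable.congr ?_
  refine (ae_restrict_iff' measurableSet_Ioo).2 (Eventually.of_forall fun s hs => ?_)
  exact ((h.1 s (Ioo_subset_Icc_self hs)).hasDerivAt (Icc_mem_nhds hs.1 hs.2)).deriv

lemma IsCurve.integrableOn {φ φ' : ℝ → M2} (h : IsCurve φ φ') :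
    IntegrableOn φ' (Icc (-1 : ℝ) 1) :=
  (integrable_norm_iff h.aestronglyMeasurable).1 h.2

lemma IsCurve.integrableOn_LW {φ φ' : ℝ → M2} (h : IsCurve φ φ') {V : M2 → ℝ}
    (hV : Continuous V) :
    IntegrableOn (fun s => Real.sqrt (V (φ s)) * ‖φ' s‖) (Icc (-1 : ℝ) 1) := by
  refine IntegrableOn.continuousOn_mul ?_ h.2 isCompact_Icc
  exact (hV.sqrt).comp_continuousOn h.continuousOn

lemma LW_nonneg (V : M2 → ℝ) (φ φ' : ℝ → M2) : 0 ≤ LW V φ φ' :=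
  mul_nonneg (by norm_num) (integral_nonneg fun s => by positivity)

/-- Comparison of lengths from a pointwise comparison of the integrands. Only the larger
integrand has to be integrable. -/
lemma LW_le_mul {V U : M2 → ℝ} {φ φ' ψ ψ' : ℝ → M2} (c : ℝ) (h : IsCurve φ φ')
    (hU : Continuous U)
    (hle : ∀ s, Real.sqrt (V (ψ s)) * ‖ψ' s‖ ≤ c * (Real.sqrt (U (φ s)) * ‖φ' s‖)) :
    LW V ψ ψ' ≤ c * LW U φ φ' := by
  unfold LW
  rw [mul_left_comm, ← integral_const_mul c]
  refine mul_le_mul_of_nonneg_left ?_ (by norm_num)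
  exact integral_mono_of_nonneg (Eventually.of_forall fun s => by positivity)
    ((h.integrableOn_LW hU).const_mul c) (Eventually.of_forall hle)

lemma IsCurve.proj2 {φ φ' : ℝ → M2} (h : IsCurve φ φ') :
    IsCurve (fun s => proj2 (φ s)) (fun s => proj2 (φ' s)) := by
  refine ⟨fun s hs => ?_, ?_⟩
  · exact projL.hasFDerivAt.comp_hasDerivWithinAt s (h.1 s hs)
  · exact (projL.integrable_comp h.integrableOn).norm

/-- The set of lengths defining `d_V(A, -A)` is non-empty: the segment is a curve. -/
lemma segment_isCurve (A : M2) :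
    IsCurve (fun s => (-s) • A) (fun _ => -A) := by
  refine ⟨fun s _ => ?_, ?_⟩
  · simpa using ((hasDerivAt_id s).neg.smul_const A).hasDerivWithinAt
  · exact integrableOn_const (by simp)

lemma le_dW {V : M2 → ℝ} {A : M2} {r : ℝ}
    (h : ∀ φ φ', IsCurve φ φ' → φ (-1) = A → φ 1 = -A → r ≤ LW V φ φ') :
    r ≤ dW V A (-A) := by
  refine le_csInf ⟨_, _, _, segment_isCurve A, by simp, by simp, rfl⟩ ?_
  rintro _ ⟨φ, φ', hφ, h1, h2, rfl⟩
  exact h φ φ' hφ h1 h2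

lemma dW_le {V : M2 → ℝ} {M N : M2} {φ φ' : ℝ → M2} (h : IsCurve φ φ')
    (h1 : φ (-1) = M) (h2 : φ 1 = N) : dW V M N ≤ LW V φ φ' := by
  refine csInf_le ⟨0, ?_⟩ ⟨φ, φ', h, h1, h2, rfl⟩
  rintro _ ⟨ψ, ψ', -, -, -, rfl⟩
  exact LW_nonneg _ _ _

lemma dW_le_mul {V U : M2 → ℝ} {A : M2} {c : ℝ} (hc : 0 < c)
    (h : ∀ φ φ', IsCurve φ φ' → φ (-1) = A → φ 1 = -A →
      ∃ ψ ψ', IsCurve ψ ψ' ∧ ψ (-1) = A ∧ ψ 1 = -A ∧ LW V ψ ψ' ≤ c * LW U φ φ') :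
    dW V A (-A) ≤ c * dW U A (-A) := by
  rw [← div_le_iff₀' hc]
  refine le_dW fun φ φ' hφ h1 h2 => ?_
  obtain ⟨ψ, ψ', hψ, k1, k2, hle⟩ := h φ φ' hφ h1 h2
  rw [div_le_iff₀' hc]
  exact (dW_le hψ k1 k2).trans hle

/-- Special case of `dW_le_mul` in which the curve is kept. -/
lemma dW_le_mul_of_sqrt_le {V U : M2 → ℝ} (A : M2) {c : ℝ} (hc : 0 < c) (hU : Continuous U)
    (h : ∀ M, Real.sqrt (V M) ≤ c * Real.sqrt (U M)) :
    dW V A (-A) ≤ c * dW U A (-A) := by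
  refine dW_le_mul hc fun φ φ' hφ h1 h2 => ⟨φ, φ', hφ, h1, h2, LW_le_mul c hφ hU fun s => ?_⟩
  rw [← mul_assoc]
  exact mul_le_mul_of_nonneg_right (h _) (norm_nonneg _)

/-! ### Comparison and positivity of the reference distances -/

lemma dW_W0_proj2_eq (a : V2) :
    dW (fun M => W0 a (proj2 M)) (wellA a) (-(wellA a)) =
      dW (W0 a) (wellA a) (-(wellA a)) := by
  apply le_antisymm
  · have := dW_le_mul_of_sqrt_le (V := fun M => W0 a (proj2 M)) (wellA a) one_pos
      (continuous_W0 a) (fun M => by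
        rw [one_mul]
        exact Real.sqrt_le_sqrt (W0_proj2_le a M))
    rwa [one_mul] at this
  · have := dW_le_mul (V := W0 a) (U := fun M => W0 a (proj2 M)) (A := wellA a) one_pos
      (fun φ φ' hφ h1 h2 => ⟨_, _, hφ.proj2, by simp only [h1, proj2_wellA],
        by simp only [h2, proj2_neg_wellA],
        LW_le_mul 1 hφ ((continuous_W0 a).comp continuous_proj2) fun s => by
          rw [one_mul]
          exact mul_le_mul_of_nonneg_left (norm_proj2_le _) (Real.sqrt_nonneg _)⟩)
    rwa [one_mul] at this

lemma dW_W0_pos (a : V2) (ha : a ≠ 0) : 0 < dW (W0 a) (wellA a) (-(wellA a)) := by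
  have hna : 0 < ‖a‖ := norm_pos_iff.2 ha
  set c : ℝ := ‖a‖ ^ 2 with hc
  have hcpos : 0 < c := by positivity
  set g : ℝ → ℝ := fun t => |(|t| - c)| with hg
  have hgc : Continuous g := by fun_prop
  have hκ : 0 < ∫ t in (-c)..c, g t := by
    refine intervalIntegral.intervalIntegral_pos_of_pos_on (hgc.intervalIntegrable _ _)
      (fun t ht => ?_) (by linarith)
    have : |t| < c := abs_lt.2 ⟨ht.1, ht.2⟩
    exact abs_pos.2 (by linarith)
  set κ := ∫ t in (-c)..c, g t with hκdef
  refine lt_of_lt_of_le (b := 2 * κ / c) (by positivity) (le_dW fun φ φ' hφ h1 h2 => ?_)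
  rw [div_le_iff₀' hcpos]
  -- `q(M) = ⟨a, m₂⟩`
  let q : M2 →L[ℝ] ℝ := (innerSL ℝ a).comp (colL 1)
  have hq : ∀ M, q M = inner ℝ a (col M 1) := fun M => rfl
  -- a primitive of `g`
  let G : ℝ → ℝ := fun x => ∫ t in (0:ℝ)..x, g t
  have hG : ∀ x, HasDerivAt G (g x) x := fun x =>
    intervalIntegral.integral_hasDerivAt_right (hgc.intervalIntegrable _ _)
      (hgc.stronglyMeasurableAtFilter _ _) hgc.continuousAt
  have hGc : Continuous G := continuous_iff_continuousAt.2 fun x => (hG x).continuousAt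
  have hgq : IntegrableOn (fun s => g (q (φ s)) * q (φ' s)) (Icc (-1 : ℝ) 1) := by
    refine IntegrableOn.continuousOn_mul ?_ (q.integrable_comp hφ.integrableOn) isCompact_Icc
    exact (hgc.comp q.continuous).comp_continuousOn hφ.continuousOn
  have hftc : ∫ s in (-1:ℝ)..1, g (q (φ s)) * q (φ' s) = G (q (φ 1)) - G (q (φ (-1))) := by
    refine intervalIntegral.integral_eq_sub_of_hasDerivAt_of_le (f := fun s => G (q (φ s)))
      (by norm_num) ((hGc.comp q.continuous).comp_continuousOn hφ.continuousOn) (fun s hs => ?_) ?_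
    · have hd := (hφ.1 s (Ioo_subset_Icc_self hs)).hasDerivAt (Icc_mem_nhds hs.1 hs.2)
      exact (hG _).comp s (q.hasFDerivAt.comp_hasDerivAt s hd)
    · rw [intervalIntegrable_iff_integrableOn_Icc_of_le (by norm_num)]
      exact hgq
  have hqA : q (wellA a) = c := by
    rw [hq, col_wellA_one, real_inner_self_eq_norm_sq]
  have hends : G (q (φ 1)) - G (q (φ (-1))) = -κ := by
    rw [h1, h2, map_neg, hqA]
    have : G c - G (-c) = κ :=
      intervalIntegral.integral_interval_sub_left (hgc.intervalIntegrable _ _)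
        (hgc.intervalIntegrable _ _)
    linarith
  have hint : ∫ s in Icc (-1:ℝ) 1, g (q (φ s)) * q (φ' s) = -κ := by
    rw [integral_Icc_eq_integral_Ioc, ← intervalIntegral.integral_of_le (by norm_num), hftc, hends]
  have hbound : κ ≤ ∫ s in Icc (-1:ℝ) 1, c * (Real.sqrt (W0 a (φ s)) * ‖φ' s‖) := by
    have hk : κ = ‖∫ s in Icc (-1:ℝ) 1, g (q (φ s)) * q (φ' s)‖ := by
      rw [hint, norm_neg, Real.norm_of_nonneg hκ.le]
    rw [hk]
    refine norm_integral_le_of_norm_le ((hφ.integrableOn_LW (continuous_W0 a)).const_mul c)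
      (Eventually.of_forall fun s => ?_)
    have e1 : ‖g (q (φ s))‖ ≤ ‖a‖ * Real.sqrt (W0 a (φ s)) := by
      rw [Real.norm_of_nonneg (abs_nonneg _)]
      exact abs_sub_le_sqrt_W0 a (φ s)
    have e2 : ‖q (φ' s)‖ ≤ ‖a‖ * ‖φ' s‖ :=
      (abs_real_inner_le_norm a (col (φ' s) 1)).trans
        (mul_le_mul_of_nonneg_left (norm_col_le _ _) (norm_nonneg a))
    rw [norm_mul]
    calc _ ≤ (‖a‖ * Real.sqrt (W0 a (φ s))) * (‖a‖ * ‖φ' s‖) :=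
          mul_le_mul e1 e2 (norm_nonneg _) (by positivity)
      _ = _ := by rw [hc]; ring
  rw [integral_const_mul] at hbound
  unfold LW
  linarith


/-- If `W` is continuous with `|√W - √W₀| ≤ σ √W₀` pointwise for some
`σ ∈ (0,1/2)`, and `W̃(M) = W(0, m₂)`, then
`d_{W̃}(A,B) ≤ (1+σ) d_{W̃₀}(A,B) = (1+σ) d_{W₀}(A,B) ≤ ((1+σ)/(1-σ)) d_W(A,B)`, and
`(1+σ)/(1-σ) < 3`, hence `d_{W̃}(A,B) < 3 d_W(A,B)`. -/
theorem geodesic_distance_chain (a : V2) (ha : a ≠ 0) (W : M2 → ℝ)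
    (hWnn : ∀ M, 0 ≤ W M) (hWc : Continuous W)
    (σ : ℝ) (hσ : σ ∈ Ioo (0:ℝ) (1/2))
    (hpert : ∀ M, |Real.sqrt (W M) - Real.sqrt (W0 a M)| ≤ σ * Real.sqrt (W0 a M)) :
    dW (fun M => W (proj2 M)) (wellA a) (-(wellA a)) ≤
        (1 + σ) * dW (fun M => W0 a (proj2 M)) (wellA a) (-(wellA a)) ∧
    dW (fun M => W0 a (proj2 M)) (wellA a) (-(wellA a)) =
        dW (W0 a) (wellA a) (-(wellA a)) ∧
    (1 + σ) * dW (W0 a) (wellA a) (-(wellA a)) ≤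
        ((1 + σ) / (1 - σ)) * dW W (wellA a) (-(wellA a)) ∧
    (1 + σ) / (1 - σ) < 3 ∧
    dW (fun M => W (proj2 M)) (wellA a) (-(wellA a)) <
        3 * dW W (wellA a) (-(wellA a)) := by
  obtain ⟨hσ0, hσ1⟩ := hσ
  have h1σ : 0 < 1 - σ := by linarith
  have hup : ∀ M, Real.sqrt (W M) ≤ (1 + σ) * Real.sqrt (W0 a M) := fun M => by
    linarith [(abs_le.1 (hpert M)).2]
  have hlow : ∀ M, Real.sqrt (W0 a M) ≤ (1 - σ)⁻¹ * Real.sqrt (W M) := fun M => by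
    rw [← div_eq_inv_mul, le_div_iff₀ h1σ]
    linarith [(abs_le.1 (hpert M)).1]
  have c1 : dW (fun M => W (proj2 M)) (wellA a) (-(wellA a)) ≤
      (1 + σ) * dW (fun M => W0 a (proj2 M)) (wellA a) (-(wellA a)) :=
    dW_le_mul_of_sqrt_le _ (by linarith) ((continuous_W0 a).comp continuous_proj2)
      fun M => hup (proj2 M)
  have c2 := dW_W0_proj2_eq a
  have c3' : dW (W0 a) (wellA a) (-(wellA a)) ≤ (1 - σ)⁻¹ * dW W (wellA a) (-(wellA a)) :=
    dW_le_mul_of_sqrt_le _ (inv_pos.2 h1σ) hWc hlow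
  have c3 : (1 + σ) * dW (W0 a) (wellA a) (-(wellA a)) ≤
      ((1 + σ) / (1 - σ)) * dW W (wellA a) (-(wellA a)) := by
    rw [div_eq_mul_inv, mul_assoc]
    exact mul_le_mul_of_nonneg_left c3' (by linarith)
  have c4 : (1 + σ) / (1 - σ) < 3 := by
    rw [div_lt_iff₀ h1σ]
    linarith
  have hpos : 0 < dW W (wellA a) (-(wellA a)) :=
    pos_of_mul_pos_right ((dW_W0_pos a ha).trans_le c3') (inv_nonneg.2 h1σ.le)
  refine ⟨c1, c2, c3, c4, ?_⟩
  rw [c2] at c1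
  exact (c1.trans c3).trans_lt (mul_lt_mul_of_pos_right c4 hpos)
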